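/- Let F and G be two mutually orthogonal Legendrian foliations on a contact metric manifold (M,φ,ξ,η,g). If M is K-contact (i.e. ξ is Killing, equivalently h = 0), then F and G belong to the same class in Pang's classification: F is flat (respectively degenerate, non-degenerate) if and only if G is flat (respectively degenerate, non-degenerate). -/

import Mathlib

/-!
For horizontal `x`, the field `[x, ξ]` is again horizontal, because `dη(x, ξ) = g(x, φ ξ) = 0`.
Hence `Π(x, x') = 2 dη(x', [x, ξ]) = 2 g(x', φ [x, ξ])` (`pang_eq`).  If `h = 0`, then `φ` commutes
with `[·, ξ]`, and since `φ` is an isometry on the contact distribution,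
`Π(φ x, φ x') = Π(x, x')` (`pang_phi_phi`).  As `φ` interchanges the two distributions `L` and `Q`,
with inverse `-φ`, it carries the Pang invariant of one foliation to that of the other, and
preserves all three classes.
-/

/-!  An algebraic (Koszul / Lie–Rinehart style) model of an (almost) contact
metric manifold `(M, φ, ξ, η, g)`.  Here `C` plays the role of the commutative
`ℝ`-algebra `C^∞(M)` of smooth functions on the manifold and `V` plays the role
of the `C`-module `Γ(TM)` of smooth vector fields, equipped with the Lie
bracket `bracket`, the derivation `act` of vector fields on functions, the
Riemannian metric `g`, the structure tensor `φ`, the `1`-form `η` and the Reeb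
vector field `ξ`.  Real constants are regarded as functions via
`algebraMap ℝ C`. -/

noncomputable section

universe u v

structure AlmostContactMetric (C : Type u) (V : Type v)
    [CommRing C] [Algebra ℝ C] [AddCommGroup V] [Module C V] where
  /-- the derivative of a function along a vector field -/
  act : V → C → C
  /-- the Lie bracket of vector fields -/
  bracket : V → V → V
  /-- the Riemannian metric -/
  g : V → V → C
  /-- the structure `(1,1)`-tensor `φ` -/
  phi : V → V
  /-- the `1`-form `η` -/
  eta : V → C
  /-- the Reeb vector field `ξ` -/
  xi : V
  act_add : ∀ u : V, ∀ f₁ f₂ : C, act u (f₁ + f₂) = act u f₁ + act u f₂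
  act_mul : ∀ u : V, ∀ f₁ f₂ : C, act u (f₁ * f₂) = act u f₁ * f₂ + f₁ * act u f₂
  act_algebraMap : ∀ u : V, ∀ r : ℝ, act u (algebraMap ℝ C r) = 0
  act_add_left : ∀ u v : V, ∀ f : C, act (u + v) f = act u f + act v f
  act_smul_left : ∀ f' : C, ∀ u : V, ∀ f : C, act (f' • u) f = f' * act u f
  bracket_add_left : ∀ u v w : V, bracket (u + v) w = bracket u w + bracket v w
  bracket_antisymm : ∀ v w : V, bracket v w = - bracket w v
  bracket_jacobi : ∀ u v w : V,
    bracket u (bracket v w) + bracket v (bracket w u) + bracket w (bracket u v) = 0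
  bracket_leibniz : ∀ v : V, ∀ f : C, ∀ w : V,
    bracket v (f • w) = act v f • w + f • bracket v w
  bracket_act : ∀ v w : V, ∀ f : C,
    act (bracket v w) f = act v (act w f) - act w (act v f)
  g_add_left : ∀ u v w : V, g (u + v) w = g u w + g v w
  g_smul_left : ∀ f : C, ∀ v w : V, g (f • v) w = f * g v w
  g_symm : ∀ v w : V, g v w = g w v
  phi_add : ∀ v w : V, phi (v + w) = phi v + phi w
  phi_smul : ∀ f : C, ∀ v : V, phi (f • v) = f • phi v
  eta_add : ∀ v w : V, eta (v + w) = eta v + eta w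
  eta_smul : ∀ f : C, ∀ v : V, eta (f • v) = f * eta v
  eta_xi : eta xi = 1
  phi_sq : ∀ v : V, phi (phi v) = - v + eta v • xi
  g_compat : ∀ v w : V, g (phi v) (phi w) = g v w - eta v * eta w
  eta_eq_g_xi : ∀ v : V, eta v = g v xi

namespace AlmostContactMetric

variable {C : Type u} {V : Type v} [CommRing C] [Algebra ℝ C]
  [AddCommGroup V] [Module C V]

/-- The fundamental 2-form `Φ(v,w) = g(v, φ w)`. -/
def Phi2 (S : AlmostContactMetric C V) (v w : V) : C := S.g v (S.phi w)

/-- The exterior derivative of `η`, with the convention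
`dη(v,w) = ½ (v(η(w)) - w(η(v)) - η([v,w]))`. -/
def dEta (S : AlmostContactMetric C V) (v w : V) : C :=
  algebraMap ℝ C (1 / 2) *
    (S.act v (S.eta w) - S.act w (S.eta v) - S.eta (S.bracket v w))

/-- The tensor field `h = ½ 𝓛_ξ φ`. -/
def h (S : AlmostContactMetric C V) (v : V) : V :=
  algebraMap ℝ C (1 / 2) • (S.bracket S.xi (S.phi v) - S.phi (S.bracket S.xi v))

/-- The contact metric condition `dη = Φ`. -/
def IsContactMetric (S : AlmostContactMetric C V) : Prop :=
  ∀ v w : V, S.dEta v w = S.Phi2 v w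

/-- `ξ` is a Killing vector field: `𝓛_ξ g = 0`. -/
def KillingXi (S : AlmostContactMetric C V) : Prop :=
  ∀ v w : V, S.act S.xi (S.g v w) =
    S.g (S.bracket S.xi v) w + S.g v (S.bracket S.xi w)

/-- K-contact: `h = 0` (for a contact metric structure this is equivalent to
`ξ` being Killing). -/
def IsKContact (S : AlmostContactMetric C V) : Prop := ∀ v : V, S.h v = 0

/-- `D` is the Levi-Civita connection of `g`. -/
structure IsLeviCivita (S : AlmostContactMetric C V) (D : V → V → V) : Prop where
  add_left : ∀ u v w : V, D (u + v) w = D u w + D v w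
  smul_left : ∀ f : C, ∀ v w : V, D (f • v) w = f • D v w
  add_right : ∀ u v w : V, D u (v + w) = D u v + D u w
  leibniz : ∀ u : V, ∀ f : C, ∀ w : V, D u (f • w) = S.act u f • w + f • D u w
  torsion_free : ∀ v w : V, D v w - D w v = S.bracket v w
  metric : ∀ u v w : V, S.act u (S.g v w) = S.g (D u v) w + S.g v (D u w)

/-- The curvature tensor of a connection:
`R(u,v)w = D_u D_v w - D_v D_u w - D_[u,v] w`. -/
def curv (S : AlmostContactMetric C V) (D : V → V → V) (u v w : V) : V :=
  D u (D v w) - D v (D u w) - D (S.bracket u v) w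

/-- The `(κ,μ)`-nullity condition:
`R(v,w)ξ = κ(η(w)v - η(v)w) + μ(η(w)hv - η(v)hw)`. -/
def KappaMu (S : AlmostContactMetric C V) (D : V → V → V) (κ μ : ℝ) : Prop :=
  ∀ v w : V, S.curv D v w S.xi
    = algebraMap ℝ C κ • (S.eta w • v - S.eta v • w)
    + algebraMap ℝ C μ • (S.eta w • S.h v - S.eta v • S.h w)

/-- A Legendrian distribution: a subbundle of the contact distribution
`D = ker η` on whose sections `dη` vanishes. -/
structure IsLegendrian (S : AlmostContactMetric C V) (L : Submodule C V) : Prop where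
  horizontal : ∀ x ∈ L, S.eta x = 0
  isotropic : ∀ x ∈ L, ∀ y ∈ L, S.dEta x y = 0

/-- Involutivity (integrability) of a distribution: it is tangent to a
foliation. -/
def Involutive (S : AlmostContactMetric C V) (L : Submodule C V) : Prop :=
  ∀ x ∈ L, ∀ y ∈ L, S.bracket x y ∈ L

/-- The Pang invariant `Π(x,x') = -η([x',[x,ξ]])` of a Legendrian foliation. -/
def Pang (S : AlmostContactMetric C V) (x x' : V) : C :=
  - S.eta (S.bracket x' (S.bracket x S.xi))

/-- Flatness of a Legendrian foliation in Pang's classification: `Π ≡ 0`. -/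
def Flat (S : AlmostContactMetric C V) (L : Submodule C V) : Prop :=
  ∀ x ∈ L, ∀ x' ∈ L, S.Pang x x' = 0

/-- Non-degeneracy of a Legendrian foliation in Pang's classification:
the bilinear form `Π` has trivial kernel. -/
def Nondegenerate (S : AlmostContactMetric C V) (L : Submodule C V) : Prop :=
  ∀ x ∈ L, (∀ x' ∈ L, S.Pang x x' = 0) → x = 0

/-- Degeneracy of a Legendrian foliation in Pang's classification:
the bilinear form `Π` has a nontrivial kernel. -/
def Degenerate (S : AlmostContactMetric C V) (L : Submodule C V) : Prop :=
  ∃ x ∈ L, x ≠ 0 ∧ ∀ x' ∈ L, S.Pang x x' = 0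

/-- `L` is the eigendistribution of `h` inside the contact distribution
`ker η` for the eigenvalue `lam`. -/
def IsEigenDistrib (S : AlmostContactMetric C V) (lam : ℝ) (L : Submodule C V) : Prop :=
  ∀ v : V, v ∈ L ↔ (S.eta v = 0 ∧ S.h v = algebraMap ℝ C lam • v)

/-- An orthogonal bi-Legendrian structure: a pair of mutually orthogonal,
conjugate (`Q = φ L`), complementary Legendrian distributions, together with
the projections of `TM = L ⊕ Q ⊕ ℝξ` onto `L` and onto `Q`. -/
structure OrthBiLegendrian (S : AlmostContactMetric C V) where
  L : Submodule C V
  Q : Submodule C V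
  legL : S.IsLegendrian L
  legQ : S.IsLegendrian Q
  orth : ∀ x ∈ L, ∀ y ∈ Q, S.g x y = 0
  conjLQ : ∀ x ∈ L, S.phi x ∈ Q
  conjQL : ∀ y ∈ Q, S.phi y ∈ L
  pL : V → V
  pQ : V → V
  pL_mem : ∀ v : V, pL v ∈ L
  pQ_mem : ∀ v : V, pQ v ∈ Q
  decomp : ∀ v : V, v = pL v + pQ v + S.eta v • S.xi
  pL_add : ∀ v w : V, pL (v + w) = pL v + pL w
  pL_smul : ∀ f : C, ∀ v : V, pL (f • v) = f • pL v
  pQ_add : ∀ v w : V, pQ (v + w) = pQ v + pQ w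
  pQ_smul : ∀ f : C, ∀ v : V, pQ (f • v) = f • pQ v
  pL_of_memL : ∀ x ∈ L, pL x = x
  pL_of_memQ : ∀ y ∈ Q, pL y = 0
  pL_xi : pL S.xi = 0
  pQ_of_memQ : ∀ y ∈ Q, pQ y = y
  pQ_of_memL : ∀ x ∈ L, pQ x = 0
  pQ_xi : pQ S.xi = 0

/-- Both distributions of the bi-Legendrian structure are integrable, i.e. the
pair is a pair of (mutually orthogonal) Legendrian foliations. -/
def OrthBiLegendrian.IsFoliated {S : AlmostContactMetric C V}
    (B : S.OrthBiLegendrian) : Prop :=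
  S.Involutive B.L ∧ S.Involutive B.Q

/-- `D` is the bi-Legendrian connection associated with the pair `(L, Q)`:
the unique linear connection preserving `L`, `Q` and `ℝξ`, parallelizing `dη`,
whose torsion satisfies `T(x,y) = 2 dη(x,y) ξ` for `x ∈ Γ(L)`, `y ∈ Γ(Q)` and
`T(v,ξ) = [ξ, v_L]_Q + [ξ, v_Q]_L`. -/
structure IsBiLegendrianConn (S : AlmostContactMetric C V)
    (B : S.OrthBiLegendrian) (D : V → V → V) : Prop where
  add_left : ∀ u v w : V, D (u + v) w = D u w + D v w
  smul_left : ∀ f : C, ∀ v w : V, D (f • v) w = f • D v w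
  add_right : ∀ u v w : V, D u (v + w) = D u v + D u w
  leibniz : ∀ u : V, ∀ f : C, ∀ w : V, D u (f • w) = S.act u f • w + f • D u w
  preserves_L : ∀ v : V, ∀ x ∈ B.L, D v x ∈ B.L
  preserves_Q : ∀ v : V, ∀ y ∈ B.Q, D v y ∈ B.Q
  preserves_xi : ∀ v : V, ∃ f : C, D v S.xi = f • S.xi
  parallel_dEta : ∀ u v w : V,
    S.act u (S.dEta v w) = S.dEta (D u v) w + S.dEta v (D u w)
  torsion_mixed : ∀ x ∈ B.L, ∀ y ∈ B.Q,
    D x y - D y x - S.bracket x y = (2 * S.dEta x y) • S.xi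
  torsion_xi : ∀ v : V, D v S.xi - D S.xi v - S.bracket v S.xi
    = B.pQ (S.bracket S.xi (B.pL v)) + B.pL (S.bracket S.xi (B.pQ v))

/-- `D φ = 0`. -/
def ParallelPhi (S : AlmostContactMetric C V) (D : V → V → V) : Prop :=
  ∀ v w : V, D v (S.phi w) = S.phi (D v w)

/-- `D h = 0`. -/
def ParallelH (S : AlmostContactMetric C V) (D : V → V → V) : Prop :=
  ∀ v w : V, D v (S.h w) = S.h (D v w)

/-- `D g = 0`. -/
def ParallelG (S : AlmostContactMetric C V) (D : V → V → V) : Prop :=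
  ∀ u v w : V, S.act u (S.g v w) = S.g (D u v) w + S.g v (D u w)

/-- `D η = 0`. -/
def ParallelEta (S : AlmostContactMetric C V) (D : V → V → V) : Prop :=
  ∀ v w : V, S.act v (S.eta w) = S.eta (D v w)

end AlmostContactMetric

namespace AlmostContactMetric

section

variable {C : Type u} {V : Type v} [CommRing C] [Algebra ℝ C] [AddCommGroup V] [Module C V]
  (S : AlmostContactMetric C V)

lemma act_zero (v : V) : S.act v 0 = 0 := by
  simpa using S.act_algebraMap v 0

lemma act_one (v : V) : S.act v 1 = 0 := by
  simpa using S.act_algebraMap v 1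

lemma eta_zero : S.eta 0 = 0 := by
  simpa using S.eta_smul 0 0

lemma eta_neg (v : V) : S.eta (-v) = -S.eta v := by
  simpa using S.eta_smul (-1) v

lemma phi_zero : S.phi 0 = 0 := by
  simpa using S.phi_smul 0 0

lemma phi_neg (v : V) : S.phi (-v) = -S.phi v := by
  simpa using S.phi_smul (-1) v

lemma algebraMap_half_add_half : algebraMap ℝ C (1 / 2) + algebraMap ℝ C (1 / 2) = 1 := by
  rw [← map_add]; norm_num

lemma two_mul_algebraMap_half : 2 * algebraMap ℝ C (1 / 2) = 1 := by
  rw [two_mul, algebraMap_half_add_half]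

variable {S}

/-- The algebra alone only gives `φ ξ = f ξ` with `f ^ 2 = 0`, and `C` may have nilpotents; the
contact condition removes this ambiguity through `f = dη(ξ, ξ) = 0`. -/
lemma phi_xi (hS : S.IsContactMetric) : S.phi S.xi = 0 := by
  have hη : S.eta (S.phi S.xi) = 0 := by
    have h1 := hS S.xi S.xi
    have h2 : S.eta (S.bracket S.xi S.xi) = -S.eta (S.bracket S.xi S.xi) := by
      rw [← eta_neg, ← S.bracket_antisymm]
    have h3 : S.eta (S.bracket S.xi S.xi) = 0 := by
      linear_combination algebraMap ℝ C (1 / 2) * h2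
        - S.eta (S.bracket S.xi S.xi) * two_mul_algebraMap_half (C := C)
    rw [dEta, Phi2, h3, S.g_symm, ← S.eta_eq_g_xi] at h1
    simpa using h1.symm
  have h4 := S.phi_sq (S.phi S.xi)
  rw [S.phi_sq S.xi, S.eta_xi, hη] at h4
  simpa [phi_zero] using h4

lemma eta_phi (hS : S.IsContactMetric) (v : V) : S.eta (S.phi v) = 0 := by
  -- Compare the two evaluations of `φ (φ (φ v))`.
  have h1 := S.phi_sq (S.phi v)
  rw [S.phi_sq v, S.phi_add, S.phi_smul, phi_neg, phi_xi hS, smul_zero, add_zero] at h1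
  have h2 : S.eta (S.phi v) • S.xi = 0 := by simpa using h1
  simpa [S.eta_smul, S.eta_xi, eta_zero] using congrArg S.eta h2

lemma phi_phi {x : V} (hx : S.eta x = 0) : S.phi (S.phi x) = -x := by
  simp [S.phi_sq, hx]

lemma eta_bracket_xi (hS : S.IsContactMetric) {x : V} (hx : S.eta x = 0) :
    S.eta (S.bracket x S.xi) = 0 := by
  have h1 := hS S.xi x
  rw [dEta, Phi2, S.g_symm, ← S.eta_eq_g_xi, eta_phi hS, hx, S.eta_xi, act_zero, act_one,
    S.bracket_antisymm, eta_neg] at h1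
  linear_combination 2 * h1 - S.eta (S.bracket x S.xi) * two_mul_algebraMap_half (C := C)

lemma pang_eq (hS : S.IsContactMetric) {x x' : V} (hx : S.eta x = 0) (hx' : S.eta x' = 0) :
    S.Pang x x' = 2 * S.g x' (S.phi (S.bracket x S.xi)) := by
  have h1 := hS x' (S.bracket x S.xi)
  rw [dEta, Phi2, eta_bracket_xi hS hx, hx', act_zero, act_zero] at h1
  rw [Pang]
  linear_combination 2 * h1 + S.eta (S.bracket x' (S.bracket x S.xi)) *
    two_mul_algebraMap_half (C := C)

lemma IsKContact.bracket_phi_xi (hK : S.IsKContact) (v : V) :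
    S.bracket (S.phi v) S.xi = S.phi (S.bracket v S.xi) := by
  have h1 := congrArg (fun w => (2 : C) • w) (hK v)
  simp only [h, smul_smul, two_mul_algebraMap_half, one_smul, smul_zero] at h1
  rw [S.bracket_antisymm (S.phi v), S.bracket_antisymm v, phi_neg, sub_eq_zero.mp h1]

/-- On a K-contact manifold the Pang invariant is preserved by `φ`. -/
lemma pang_phi_phi (hS : S.IsContactMetric) (hK : S.IsKContact) {x x' : V}
    (hx : S.eta x = 0) (hx' : S.eta x' = 0) :
    S.Pang (S.phi x) (S.phi x') = S.Pang x x' := by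
  rw [pang_eq hS (eta_phi hS x) (eta_phi hS x'), pang_eq hS hx hx', hK.bracket_phi_xi,
    S.g_compat, hx', zero_mul, sub_zero]

lemma pang_phi_left (hS : S.IsContactMetric) (hK : S.IsKContact) {x y : V}
    (hx : S.eta x = 0) (hy : S.eta y = 0) :
    S.Pang (S.phi x) y = S.Pang x (-S.phi y) := by
  have hy' : S.eta (-S.phi y) = 0 := by rw [eta_neg, eta_phi hS, neg_zero]
  rw [← pang_phi_phi hS hK hx hy', phi_neg, phi_phi hy, neg_neg]

lemma Flat.of_conj (hS : S.IsContactMetric) (hK : S.IsKContact) {L Q : Submodule C V}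
    (hQ : ∀ y ∈ Q, S.eta y = 0) (hQL : ∀ y ∈ Q, S.phi y ∈ L) (hF : S.Flat L) : S.Flat Q := by
  intro y hy y' hy'
  rw [← pang_phi_phi hS hK (hQ y hy) (hQ y' hy')]
  exact hF _ (hQL y hy) _ (hQL y' hy')

lemma Degenerate.of_conj (hS : S.IsContactMetric) (hK : S.IsKContact) {L Q : Submodule C V}
    (hL : ∀ x ∈ L, S.eta x = 0) (hQ : ∀ y ∈ Q, S.eta y = 0)
    (hLQ : ∀ x ∈ L, S.phi x ∈ Q) (hQL : ∀ y ∈ Q, S.phi y ∈ L) (hD : S.Degenerate L) :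
    S.Degenerate Q := by
  obtain ⟨x, hx, hx0, hker⟩ := hD
  refine ⟨S.phi x, hLQ x hx, fun h0 => hx0 ?_, fun y hy => ?_⟩
  · simpa [h0, phi_zero] using phi_phi (hL x hx)
  · rw [pang_phi_left hS hK (hL x hx) (hQ y hy)]
    exact hker _ (L.neg_mem (hQL y hy))

lemma nondegenerate_iff_not_degenerate {L : Submodule C V} :
    S.Nondegenerate L ↔ ¬ S.Degenerate L := by
  unfold Nondegenerate Degenerate
  grind

end

end AlmostContactMetric

open AlmostContactMetric

variable {C : Type u} {V : Type v} [CommRing C] [Algebra ℝ C]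
  [AddCommGroup V] [Module C V]


/-- Corollary 2.7: if the contact metric manifold is
K-contact (`h = 0`), then the two mutually orthogonal Legendrian foliations
`F = B.L` and `G = B.Q` belong to the same class in Pang's classification. -/
theorem same_pang_class_of_kContact
    (S : AlmostContactMetric C V) (hS : S.IsContactMetric)
    (B : S.OrthBiLegendrian) (hB : B.IsFoliated)
    (hK : S.IsKContact) :
    (S.Flat B.L ↔ S.Flat B.Q) ∧
    (S.Degenerate B.L ↔ S.Degenerate B.Q) ∧
    (S.Nondegenerate B.L ↔ S.Nondegenerate B.Q) := by
  have hL := B.legL.horizontal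
  have hQ := B.legQ.horizontal
  have hdeg : S.Degenerate B.L ↔ S.Degenerate B.Q :=
    ⟨.of_conj hS hK hL hQ B.conjLQ B.conjQL, .of_conj hS hK hQ hL B.conjQL B.conjLQ⟩
  refine ⟨⟨.of_conj hS hK hQ B.conjQL, .of_conj hS hK hL B.conjLQ⟩, hdeg, ?_⟩
  rw [nondegenerate_iff_not_degenerate, nondegenerate_iff_not_degenerate, hdeg]
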